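/- Antipodal pairs never need a combination of shortcuts in near-optimal configurations: let k ∈ {3,4,5,6} and let S be a set of k shortcuts with diam(S) ≤ π − δ*_k. Then for every antipodal pair p ∈ C, q = p + π, one has d_S(p,q) = min(d(p,q), min_{s∈S} d_{{s}}(p,q)); that is, some shortest path from p to q uses at most one shortcut of S. -/

import Mathlib

open Real MeasureTheory

/-- Arc distance between points on the unit circle, given by their polar angles:
the length of the shorter arc between them. -/
noncomputable def arcDist (p q : ℝ) : ℝ := ⨅ n : ℤ, |p - q + 2 * π * n|

/-- Euclidean length of the chord between the circle points with angles `u` and `v`. -/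
noncomputable def chordLen (u v : ℝ) : ℝ := 2 * Real.sin (arcDist u v / 2)

/-- A pair of angles is a genuine shortcut (chord) if its endpoints are distinct points. -/
def IsShortcut (s : ℝ × ℝ) : Prop := arcDist s.1 s.2 ≠ 0

/-- δ(a) = arcsin(a/2) - a/2. -/
noncomputable def sdelta (a : ℝ) : ℝ := Real.arcsin (a / 2) - a / 2

/-- Cost of a path that starts at `p`, fully traverses the listed chords in order
(travelling along the circle in between), and ends at `q`. -/
noncomputable def walkCost (q : ℝ) : ℝ → List (ℝ × ℝ) → ℝ
  | p, [] => arcDist p q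
  | p, e :: L => arcDist p e.1 + chordLen e.1 e.2 + walkCost q e.2 L

/-- Shortest-path distance from `p` to `q` using the shortcuts of `S`
(each usable in either orientation, and always traversed completely). -/
noncomputable def dS (S : Finset (ℝ × ℝ)) (p q : ℝ) : ℝ :=
  sInf {c | ∃ L : List (ℝ × ℝ), (∀ e ∈ L, e ∈ S ∨ (e.2, e.1) ∈ S) ∧ c = walkCost q p L}

/-- Diameter of the circle augmented with the shortcuts of `S`. -/
noncomputable def diamS (S : Finset (ℝ × ℝ)) : ℝ :=
  sSup {d | ∃ p q : ℝ, d = dS S p q}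

/-- diam(k): the optimal diameter achievable with `k` shortcuts. -/
noncomputable def diamK (k : ℕ) : ℝ :=
  sInf {d | ∃ S : Finset (ℝ × ℝ), S.card = k ∧ (∀ s ∈ S, IsShortcut s) ∧ d = diamS S}

/-- Distance from `p` to `q` when a single shortcut with endpoints `u`, `v` is available. -/
noncomputable def dOne (u v p q : ℝ) : ℝ :=
  min (arcDist p q)
    (min (arcDist p u + chordLen u v + arcDist v q)
      (arcDist p v + chordLen u v + arcDist u q))

/-- Two angles represent the same point of the circle. -/
def SamePoint (p q : ℝ) : Prop := arcDist p q = 0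

/-- Two pairs of angles represent the same chord of the circle. -/
def SameChord (s t : ℝ × ℝ) : Prop :=
  (SamePoint s.1 t.1 ∧ SamePoint s.2 t.2) ∨ (SamePoint s.1 t.2 ∧ SamePoint s.2 t.1)

/-- `p` lies in the deep umbra of the shortcut from `u` to `u + β`
(where `0 < β ≤ π` is the counterclockwise arc spanned by the shortcut):
`p` lies in the inner umbra, and `|p u'| + |s| ≥ d(p, v')` where `u'` is the
endpoint closer to `p` and `v'` the other one. -/
def InDeepUmbra (u β p : ℝ) : Prop :=
  (∃ t : ℝ, sdelta (chordLen u (u + β)) ≤ t ∧ t ≤ β - sdelta (chordLen u (u + β)) ∧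
    arcDist p (u + t) = 0) ∧
  (arcDist p u ≤ arcDist p (u + β) →
    arcDist p (u + β) ≤ chordLen p u + chordLen u (u + β)) ∧
  (arcDist p (u + β) ≤ arcDist p u →
    arcDist p u ≤ chordLen p (u + β) + chordLen u (u + β))

/-- `d` equals δ*_k : for `k ∈ {3,4,5}` this is `δ(a*_k)` where `a*_k + δ(a*_k) = (k-1)π/k`,
and for `k = 6` it is `δ(2) = π/2 - 1`. -/
def dstarSpec (k : ℕ) (d : ℝ) : Prop :=
  (k = 6 ∧ d = sdelta 2) ∨
    (∃ a, a ∈ Set.Icc (0 : ℝ) 2 ∧ a + sdelta a = ((k : ℝ) - 1) * π / k ∧ d = sdelta a)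

/-!
A chord of length `a` saves `2 * sdelta a` over the arc above it. Suppose that any two points are
joined by a walk of cost at most `D`. For every direction `θ` some pair `θ - t`, `θ + t` is joined
by such walks along both of its arcs, and together these walks save at least `2 * (π - D)`. Each
chord they use has its arc midpoint close to `θ` or to `θ + π`, since little more than `D - a` is
left to travel on either side of it. Integrating over `θ` yields
`π * (π - D) ≤ ∑ s, min (sdelta a_s) (π - D) * reach (D - a_s)`. At the optimal diameter this leaves
no room for a chord of length at most `D / 2`, so two chords already cost more than the diameter.
-/

open Set Filter Topology

/-! ### The arc spanned by a path -/

/-- An upper bound for the arc that a path of length `r`, mixing arcs and chords, can span.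
It is the Taylor polynomial of `2 * arcsin (r / 2)` with the last coefficient enlarged so that
the bound holds on all of `[0, 2]`. -/
noncomputable def reach (r : ℝ) : ℝ := r + r ^ 3 / 24 + 5 * r ^ 5 / 192

theorem le_reach {r : ℝ} (hr : 0 ≤ r) : r ≤ reach r := by
  have : 0 ≤ r ^ 3 / 24 + 5 * r ^ 5 / 192 := by positivity
  unfold reach
  linarith

theorem reach_nonneg {r : ℝ} (hr : 0 ≤ r) : 0 ≤ reach r := hr.trans (le_reach hr)

theorem reach_mono {r t : ℝ} (hr : 0 ≤ r) (hrt : r ≤ t) : reach r ≤ reach t := by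
  unfold reach
  gcongr

theorem reach_add_le {r t : ℝ} (hr : 0 ≤ r) (ht : 0 ≤ t) :
    reach r + reach t ≤ reach (r + t) := by
  have h3 := pow_add_pow_le hr ht (by norm_num : (3 : ℕ) ≠ 0)
  have h5 := pow_add_pow_le hr ht (by norm_num : (5 : ℕ) ≠ 0)
  unfold reach
  linarith

theorem continuous_reach : Continuous reach := by
  unfold reach
  fun_prop

theorem hasDerivAt_reach (r : ℝ) :
    HasDerivAt reach (1 + r ^ 2 / 8 + 25 * r ^ 4 / 192) r := by
  have h := ((hasDerivAt_id r).add ((hasDerivAt_pow 3 r).div_const 24)).add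
    (((hasDerivAt_pow 5 r).const_mul 5).div_const 192)
  refine h.congr_deriv ?_
  push_cast
  ring

theorem deriv_reach_le_two_mul_reach {r : ℝ} (hr : 11 / 20 ≤ r) :
    1 + r ^ 2 / 8 + 25 * r ^ 4 / 192 ≤ 2 * reach r := by
  have h2 : 0 ≤ r ^ 2 * (r - 11 / 20) := by have := sub_nonneg.2 hr; positivity
  have h4 : 0 ≤ r ^ 4 * (r - 11 / 20) := by have := sub_nonneg.2 hr; positivity
  unfold reach
  nlinarith [sq_nonneg (r ^ 2 - 1), sq_nonneg (r - 1)]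

theorem two_mul_le_reach_two_mul_sin_of_sq_le {φ : ℝ} (h0 : 0 ≤ φ) (h1 : φ ^ 2 ≤ 6 / 5) :
    2 * φ ≤ reach (2 * sin φ) := by
  obtain ⟨w, hw⟩ : ∃ w, w = 1 - φ ^ 2 / 6 := ⟨_, rfl⟩
  have hw_lower : 4 / 5 ≤ w := by linarith
  have hw_upper : w ≤ 1 := by linarith [sq_nonneg φ]
  have sin_lower : φ * w ≤ sin φ := by
    rw [hw]
    linarith [sin_ge_sub_cube h0, show φ * (1 - φ ^ 2 / 6) = φ - φ ^ 3 / 6 by ring]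
  have cube_lower : 1 - 3 * (1 - w) ≤ w ^ 3 := by
    have bernoulli := one_add_mul_le_pow (by linarith : (-2 : ℝ) ≤ w - 1) 3
    rw [add_sub_cancel] at bernoulli
    push_cast at bernoulli
    linarith
  have fifth_lower : (4 / 5 : ℝ) ^ 5 ≤ w ^ 5 := by gcongr
  have factor_nonneg : 0 ≤ w ^ 3 + 15 * (1 - w) * w ^ 5 - 1 := by nlinarith
  have taylor : reach (2 * (φ * w)) - 2 * φ =
      2 * φ * ((1 - w) * (w ^ 3 + 15 * (1 - w) * w ^ 5 - 1)) := by
    have hφ : φ ^ 2 = 6 * (1 - w) := by linarith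
    have h3 : φ ^ 3 = φ * (6 * (1 - w)) := by rw [← hφ]; ring
    have h5 : φ ^ 5 = φ * (6 * (1 - w)) ^ 2 := by rw [← hφ]; ring
    unfold reach
    linear_combination (w ^ 3 / 3) * h3 + (5 * w ^ 5 / 6) * h5
  have : 0 ≤ 2 * φ * ((1 - w) * (w ^ 3 + 15 * (1 - w) * w ^ 5 - 1)) := by
    have := sub_nonneg.2 hw_upper
    positivity
  calc 2 * φ ≤ reach (2 * (φ * w)) := by linarith
    _ ≤ reach (2 * sin φ) := reach_mono (by positivity) (by linarith)

theorem two_mul_le_reach_two_mul_sin_of_ge {φ : ℝ} (h0 : 21 / 20 ≤ φ) (h1 : φ ≤ π / 2) :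
    2 * φ ≤ reach (2 * sin φ) := by
  obtain ⟨t, ht⟩ : ∃ t, t = π / 2 - φ := ⟨_, rfl⟩
  have t_upper : t ≤ 0.521 := by linarith [pi_lt_d4]
  have sin_lower : 1 - t ^ 2 / 2 ≤ sin φ := by
    rw [show φ = π / 2 - t by linarith, sin_pi_div_two_sub]
    exact one_sub_sq_div_two_le_cos
  have cube_lower := one_add_mul_le_pow (by nlinarith : (-2 : ℝ) ≤ -(t ^ 2 / 2)) 3
  have fifth_lower := one_add_mul_le_pow (by nlinarith : (-2 : ℝ) ≤ -(t ^ 2 / 2)) 5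
  push_cast at cube_lower fifth_lower
  have : 2 * φ ≤ reach (2 * (1 - t ^ 2 / 2)) := by
    have cos_reach : reach (2 * (1 + -(t ^ 2 / 2))) ≥ 2 * (19 / 12 - 43 / 24 * t ^ 2) := by
      unfold reach
      rw [mul_pow, mul_pow]
      linarith
    rw [← sub_eq_add_neg] at cos_reach
    nlinarith [pi_lt_d4]
  exact this.trans (reach_mono (by nlinarith) (by linarith))

theorem two_mul_le_reach_two_mul_sin {φ : ℝ} (h0 : 0 ≤ φ) (h1 : φ ≤ π / 2) :
    2 * φ ≤ reach (2 * sin φ) := by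
  rcases le_total φ (21 / 20) with h | h
  · exact two_mul_le_reach_two_mul_sin_of_sq_le h0 (by nlinarith)
  · exact two_mul_le_reach_two_mul_sin_of_ge h h1

theorem four_mul_cos_mul_sub_sin_le {φ : ℝ} (h0 : 0 ≤ φ) (h1 : φ ≤ π / 2) :
    4 * cos φ * (φ - sin φ) ≤ 1 - cos φ := by
  obtain ⟨q, hq⟩ : ∃ q, q = sin (φ / 2) ^ 2 := ⟨_, rfl⟩
  have φ_upper : φ ≤ 1.571 := by linarith [pi_lt_d4]
  have cos_eq : cos φ = 1 - 2 * q := by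
    rw [hq, show φ = 2 * (φ / 2) by ring, cos_two_mul, cos_sq']
    ring_nf
  have q_lower : φ ^ 2 / 4 * (1 - φ ^ 2 / 12) ≤ q := by
    have half := sin_ge_sub_cube (by linarith : 0 ≤ φ / 2)
    have : 0 ≤ φ / 2 - (φ / 2) ^ 3 / 6 := by
      rw [show φ / 2 - (φ / 2) ^ 3 / 6 = φ / 2 * (1 - φ ^ 2 / 24) by ring]
      exact mul_nonneg (by linarith) (by nlinarith)
    rw [hq]
    nlinarith [pow_le_pow_left₀ this half 2, pow_nonneg h0 6]
  have cube_le_q : φ ^ 3 / 3 ≤ q * (1 + 2 * φ ^ 3 / 3) := by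
    have poly : 4 * φ / 3 ≤ (1 - φ ^ 2 / 12) * (1 + 2 * φ ^ 3 / 3) := by
      have fifth_upper : φ ^ 5 ≤ 2.47 * φ ^ 3 := by
        rw [show φ ^ 5 = φ ^ 2 * φ ^ 3 by ring]
        gcongr
        nlinarith
      nlinarith [mul_nonneg h0 (sq_nonneg (φ - 1)), sq_nonneg (φ - 19 / 20)]
    calc φ ^ 3 / 3 = φ ^ 2 / 4 * (4 * φ / 3) := by ring
      _ ≤ φ ^ 2 / 4 * ((1 - φ ^ 2 / 12) * (1 + 2 * φ ^ 3 / 3)) := by gcongr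
      _ = φ ^ 2 / 4 * (1 - φ ^ 2 / 12) * (1 + 2 * φ ^ 3 / 3) := by ring
      _ ≤ q * (1 + 2 * φ ^ 3 / 3) := by gcongr
  have cos_nonneg : 0 ≤ cos φ := cos_nonneg_of_mem_Icc ⟨by linarith, h1⟩
  calc 4 * cos φ * (φ - sin φ) ≤ 4 * cos φ * (φ ^ 3 / 6) := by
        gcongr
        linarith [sin_ge_sub_cube h0]
    _ ≤ 1 - cos φ := by
        rw [cos_eq]
        linarith

theorem monotoneOn_sub_sin_mul_reach {D : ℝ} (hD : π / 2 + 1 ≤ D) :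
    MonotoneOn (fun φ => (φ - sin φ) * reach (D - 2 * sin φ)) (Icc 0 (π / 2)) := by
  have hderiv (φ : ℝ) : HasDerivAt (fun φ => (φ - sin φ) * reach (D - 2 * sin φ))
      ((1 - cos φ) * reach (D - 2 * sin φ) + (φ - sin φ) *
        ((1 + (D - 2 * sin φ) ^ 2 / 8 + 25 * (D - 2 * sin φ) ^ 4 / 192) * -(2 * cos φ))) φ :=
    ((hasDerivAt_id φ).sub (hasDerivAt_sin φ)).mul
      ((hasDerivAt_reach _).comp φ (((hasDerivAt_sin φ).const_mul 2).const_sub D))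
  refine monotoneOn_of_hasDerivWithinAt_nonneg (convex_Icc _ _)
    (fun φ _ => (hderiv φ).continuousAt.continuousWithinAt)
    (fun φ _ => (hderiv φ).hasDerivWithinAt) fun φ hφ => ?_
  obtain ⟨h0, h1⟩ := interior_subset hφ
  have slack_lower : 11 / 20 ≤ D - 2 * sin φ := by linarith [sin_le_one φ, pi_gt_d4]
  have reach_nonneg := reach_nonneg (by linarith : 0 ≤ D - 2 * sin φ)
  have cos_nonneg : 0 ≤ cos φ := cos_nonneg_of_mem_Icc ⟨by linarith, h1⟩
  have gain_nonneg : 0 ≤ φ - sin φ := sub_nonneg.2 (sin_le h0)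
  have := calc
    (φ - sin φ) * (2 * cos φ) * (1 + (D - 2 * sin φ) ^ 2 / 8 + 25 * (D - 2 * sin φ) ^ 4 / 192)
    _ ≤ (φ - sin φ) * (2 * cos φ) * (2 * reach (D - 2 * sin φ)) := by
        gcongr
        exact deriv_reach_le_two_mul_reach slack_lower
    _ = 4 * cos φ * (φ - sin φ) * reach (D - 2 * sin φ) := by ring
    _ ≤ (1 - cos φ) * reach (D - 2 * sin φ) := by
        gcongr
        exact four_mul_cos_mul_sub_sin_le h0 h1
  linarith

theorem arcsin_half_mem_Icc {a : ℝ} (ha : 0 ≤ a) : arcsin (a / 2) ∈ Icc 0 (π / 2) :=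
  ⟨arcsin_nonneg.2 (by linarith), arcsin_le_pi_div_two _⟩

theorem sin_arcsin_half {a : ℝ} (ha : a ∈ Icc (0 : ℝ) 2) : sin (arcsin (a / 2)) = a / 2 :=
  sin_arcsin (by linarith [ha.1]) (by linarith [ha.2])

theorem monotoneOn_sdelta_mul_reach {D : ℝ} (hD : π / 2 + 1 ≤ D) :
    MonotoneOn (fun a => sdelta a * reach (D - a)) (Icc 0 2) := by
  have hmono : MonotoneOn (fun a : ℝ => arcsin (a / 2)) (Icc 0 2) :=
    fun a _ b _ hab => monotone_arcsin (by linarith)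
  refine ((monotoneOn_sub_sin_mul_reach hD).comp hmono
    fun a ha => arcsin_half_mem_Icc ha.1).congr fun a ha => ?_
  simp only [Function.comp_apply, sin_arcsin_half ha, sdelta, mul_div_cancel₀ a two_ne_zero]

theorem monotoneOn_sdelta : MonotoneOn sdelta (Icc 0 2) := by
  intro a ha b hb hab
  have hle : arcsin (a / 2) ≤ arcsin (b / 2) := monotone_arcsin (by linarith)
  have := (le_abs_self _).trans (abs_sin_sub_sin_le (arcsin (b / 2)) (arcsin (a / 2)))
  rw [sin_arcsin_half ha, sin_arcsin_half hb, abs_of_nonneg (sub_nonneg.2 hle)] at this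
  unfold sdelta
  linarith

theorem sdelta_zero : sdelta 0 = 0 := by simp [sdelta]

theorem sdelta_two : sdelta 2 = π / 2 - 1 := by simp [sdelta]

theorem sdelta_nonneg {a : ℝ} (ha : a ∈ Icc (0 : ℝ) 2) : 0 ≤ sdelta a :=
  sdelta_zero ▸ monotoneOn_sdelta (left_mem_Icc.2 zero_le_two) ha ha.1

theorem sdelta_le {a : ℝ} (ha : a ∈ Icc (0 : ℝ) 2) : sdelta a ≤ π / 2 - 1 :=
  sdelta_two ▸ monotoneOn_sdelta ha (right_mem_Icc.2 zero_le_two) ha.2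

theorem min_sdelta_mul_reach_le {a b D : ℝ} (ha : a ∈ Icc (0 : ℝ) 2) (hb : b ∈ Icc (0 : ℝ) 2)
    (hD : π / 2 + 1 ≤ D) :
    min (sdelta a) (sdelta b) * reach (D - a) ≤ sdelta b * reach (D - b) := by
  have slack_nonneg : 0 ≤ D - a := by linarith [ha.2, pi_gt_three]
  rcases le_total a b with hab | hba
  · exact (mul_le_mul_of_nonneg_right (min_le_left _ _) (reach_nonneg slack_nonneg)).trans
      (monotoneOn_sdelta_mul_reach hD ha hb hab)
  · exact mul_le_mul (min_le_right _ _) (reach_mono slack_nonneg (by linarith))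
      (reach_nonneg slack_nonneg) (sdelta_nonneg hb)

/-! ### The deficit of a short chord -/

theorem sdelta_mul_reach_le {b c β : ℝ} (hb : 0 ≤ b) (hbc : b ≤ c) (hβ : 0 ≤ β) (hβπ : β ≤ π / 2)
    (hcβ : c / 2 ≤ β - β ^ 3 / 6) : sdelta b * reach b ≤ β ^ 3 / 6 * reach c := by
  have half_le_sin : b / 2 ≤ sin β := by linarith [sin_ge_sub_cube hβ]
  have φ_nonneg := (arcsin_half_mem_Icc hb).1
  have sin_φ := sin_arcsin_half ⟨hb, by linarith [sin_le_one β]⟩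
  have φ_le_β : arcsin (b / 2) ≤ β :=
    arcsin_sin (by linarith [pi_pos]) hβπ ▸ monotone_arcsin half_le_sin
  have sdelta_le : sdelta b ≤ β ^ 3 / 6 := calc
    sdelta b ≤ arcsin (b / 2) ^ 3 / 6 := by
      have := sin_ge_sub_cube φ_nonneg
      unfold sdelta
      linarith
    _ ≤ β ^ 3 / 6 := by gcongr
  exact mul_le_mul sdelta_le (reach_mono hb hbc) (reach_nonneg hb) (by positivity)

theorem sin_le_tangent_at_pi_div_three {φ : ℝ} (h : π / 3 ≤ φ) :
    sin φ ≤ √3 / 2 + (φ - π / 3) / 2 := by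
  obtain ⟨t, rfl⟩ : ∃ t, φ = π / 3 + t := ⟨φ - π / 3, by ring⟩
  rw [sin_add, sin_pi_div_three, cos_pi_div_three]
  nlinarith [cos_le_one t, sin_le (by linarith : 0 ≤ t), sqrt_nonneg 3]

theorem le_sdelta_of_add_eq_two_pi_div_three {a : ℝ} (ha : a ∈ Icc (0 : ℝ) 2)
    (h : a + sdelta a = 2 * π / 3) : 0.24 ≤ sdelta a := by
  have sin_φ := sin_arcsin_half ha
  have φ_lower : π / 3 ≤ arcsin (a / 2) := by
    unfold sdelta at h
    linarith [ha.2, pi_gt_d4]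
  have tangent := sin_le_tangent_at_pi_div_three φ_lower
  have sqrt_upper : √3 ≤ 1.7321 := sqrt_le_iff.2 (by norm_num)
  unfold sdelta at h ⊢
  linarith [pi_gt_d4, pi_lt_d4]

/-- The numerical inequality behind the lower bound on chord lengths. The budget `π * sdelta a` to
be covered at diameter `D = π - sdelta a` is not reached if `k - 1` chords contribute their maximal
share while the remaining one has length at most `D / 2`. -/
def ShortChordDeficit (k : ℕ) (a : ℝ) : Prop :=
  (k - 1) * (sdelta a * reach (π - sdelta a - a)) +
    sdelta ((π - sdelta a) / 2) * reach ((π - sdelta a) / 2) < π * sdelta a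

theorem ShortChordDeficit.sdelta_pos {k : ℕ} {a : ℝ} (ha : a ∈ Icc (0 : ℝ) 2)
    (h : ShortChordDeficit k a) : 0 < sdelta a := by
  refine (sdelta_nonneg ha).lt_of_ne' fun h0 => ?_
  rw [ShortChordDeficit, h0, zero_mul, mul_zero, mul_zero, zero_add, sub_zero] at h
  exact h.not_ge (mul_nonneg (sdelta_nonneg ⟨by linarith [pi_pos], by linarith [pi_le_four]⟩)
    (reach_nonneg (by linarith [pi_pos])))

theorem shortChordDeficit_of_le {k : ℕ} {a δ₀ ρ ε : ℝ} (ha : a ∈ Icc (0 : ℝ) 2) (hk : 1 ≤ k)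
    (hδ₀ : 0 ≤ δ₀) (hδ : δ₀ ≤ sdelta a) (hρ : π - sdelta a - a ≤ ρ)
    (hshort : sdelta ((π - sdelta a) / 2) * reach ((π - sdelta a) / 2) ≤ ε)
    (hε : 0 < ε) (hnum : ε < (3.1415 - (k - 1) * reach ρ) * δ₀) : ShortChordDeficit k a := by
  have k_pos : (0 : ℝ) ≤ k - 1 := sub_nonneg.2 (by exact_mod_cast hk)
  have reach_le : reach (π - sdelta a - a) ≤ reach ρ :=
    reach_mono (by linarith [ha.2, sdelta_le ha, pi_gt_three]) hρ
  have coeff_pos : 0 ≤ 3.1415 - (k - 1) * reach ρ :=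
    (pos_of_mul_pos_left (hε.trans hnum) hδ₀).le
  have sdelta_nonneg := sdelta_nonneg ha
  unfold ShortChordDeficit
  calc (k - 1) * (sdelta a * reach (π - sdelta a - a)) +
        sdelta ((π - sdelta a) / 2) * reach ((π - sdelta a) / 2)
      ≤ (k - 1) * (sdelta a * reach ρ) + ε := by gcongr
    _ < (k - 1) * (sdelta a * reach ρ) + (3.1415 - (k - 1) * reach ρ) * δ₀ := by gcongr
    _ ≤ (k - 1) * (sdelta a * reach ρ) + (3.1415 - (k - 1) * reach ρ) * sdelta a := by gcongr
    _ = 3.1415 * sdelta a := by ring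
    _ ≤ π * sdelta a := by
        gcongr
        linarith [pi_gt_d4]

theorem sdelta_half_mul_reach_half_le {δ : ℝ} (hδ : 0.24 ≤ δ) (hδπ : δ ≤ π) :
    sdelta ((π - δ) / 2) * reach ((π - δ) / 2) ≤ 0.16 := by
  refine (sdelta_mul_reach_le (c := 1.4508) (β := 0.817) (by linarith) (by linarith [pi_lt_d4])
    (by norm_num) (by linarith [pi_gt_three]) (by norm_num)).trans ?_
  norm_num [reach]

theorem shortChordDeficit_three {a : ℝ} (ha : a ∈ Icc (0 : ℝ) 2)
    (h : a + sdelta a = 2 * π / 3) : ShortChordDeficit 3 a := by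
  have hδ := le_sdelta_of_add_eq_two_pi_div_three ha h
  refine shortChordDeficit_of_le (ρ := 1.04721) ha (by norm_num) (by norm_num) hδ
    (by linarith [pi_lt_d4])
    (sdelta_half_mul_reach_half_le hδ (by linarith [ha.1, pi_pos])) (by norm_num) ?_
  norm_num [reach]

theorem shortChordDeficit_four {a : ℝ} (ha : a ∈ Icc (0 : ℝ) 2)
    (h : a + sdelta a = 3 * π / 4) : ShortChordDeficit 4 a := by
  refine shortChordDeficit_of_le (δ₀ := 0.356) (ρ := 0.78541) ha (by norm_num) (by norm_num)
    (by linarith [ha.2, pi_gt_d4]) (by linarith [pi_lt_d4])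
    (sdelta_half_mul_reach_half_le (by linarith [ha.2, pi_gt_d4]) (by linarith [ha.1, pi_pos]))
    (by norm_num) ?_
  norm_num [reach]

theorem shortChordDeficit_five {a : ℝ} (ha : a ∈ Icc (0 : ℝ) 2)
    (h : a + sdelta a = 4 * π / 5) : ShortChordDeficit 5 a := by
  refine shortChordDeficit_of_le (δ₀ := 0.513) (ρ := 0.62833) ha (by norm_num) (by norm_num)
    (by linarith [ha.2, pi_gt_d4]) (by linarith [pi_lt_d4])
    (sdelta_half_mul_reach_half_le (by linarith [ha.2, pi_gt_d4]) (by linarith [ha.1, pi_pos]))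
    (by norm_num) ?_
  norm_num [reach]

theorem shortChordDeficit_six : ShortChordDeficit 6 2 := by
  have short : sdelta ((π - sdelta 2) / 2) * reach ((π - sdelta 2) / 2) ≤ 0.086 := by
    refine (sdelta_mul_reach_le (c := 1.2855) (β := 0.703) (by linarith [sdelta_two, pi_pos])
      (by linarith [sdelta_two, pi_lt_d4]) (by norm_num) (by linarith [pi_gt_three])
      (by norm_num)).trans ?_
    norm_num [reach]
  refine shortChordDeficit_of_le (δ₀ := 0.57) (ρ := 0.5708) (by norm_num) (by norm_num)
    (by norm_num) (by linarith [sdelta_two, pi_gt_d4]) (by linarith [sdelta_two, pi_lt_d4])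
    short (by norm_num) ?_
  norm_num [reach]

theorem exists_shortChordDeficit {k : ℕ} (hk : k ∈ ({3, 4, 5, 6} : Set ℕ)) {dstar : ℝ}
    (hd : dstarSpec k dstar) : ∃ a ∈ Icc (0 : ℝ) 2, dstar = sdelta a ∧ ShortChordDeficit k a := by
  rcases hd with ⟨rfl, rfl⟩ | ⟨a, ha, hsum, rfl⟩
  · exact ⟨2, by norm_num, rfl, shortChordDeficit_six⟩
  · refine ⟨a, ha, rfl, ?_⟩
    rcases hk with rfl | rfl | rfl | rfl
    · exact shortChordDeficit_three ha (by norm_num at hsum; exact hsum)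
    · exact shortChordDeficit_four ha (by norm_num at hsum; exact hsum)
    · exact shortChordDeficit_five ha (by norm_num at hsum; exact hsum)
    · norm_num at hsum
      linarith [sdelta_le ha, ha.2, pi_gt_d4]

/-! ### Arc distance on the additive circle -/

local notation "𝕋" => AddCircle (2 * π)

instance fact_two_pi_pos : Fact (0 < 2 * π) := ⟨two_pi_pos⟩

theorem coe_add_two_pi_mul_int (x : ℝ) (n : ℤ) : ((x + 2 * π * n : ℝ) : 𝕋) = x := by
  rw [mul_comm (2 * π), ← zsmul_eq_mul, AddCircle.coe_add, AddCircle.coe_zsmul,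
    AddCircle.coe_period, smul_zero, add_zero]

theorem arcDist_eq_norm (p q : ℝ) : arcDist p q = ‖(p : 𝕋) - q‖ := by
  rw [← AddCircle.coe_sub]
  refine le_antisymm ?_ (le_ciInf fun n => ?_)
  · refine (ciInf_le ⟨0, ?_⟩ (-round ((2 * π)⁻¹ * (p - q)))).trans_eq ?_
    · rintro _ ⟨n, rfl⟩
      exact abs_nonneg _
    · rw [AddCircle.norm_eq]
      push_cast
      ring_nf
  · rw [← coe_add_two_pi_mul_int (p - q) n]
    exact QuotientAddGroup.norm_mk_le_norm

theorem arcDist_nonneg (p q : ℝ) : 0 ≤ arcDist p q := arcDist_eq_norm p q ▸ norm_nonneg _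

theorem arcDist_comm (p q : ℝ) : arcDist p q = arcDist q p := by
  rw [arcDist_eq_norm, arcDist_eq_norm, norm_sub_rev]

theorem arcDist_le_pi (p q : ℝ) : arcDist p q ≤ π := by
  have := AddCircle.norm_le_half_period (2 * π) (x := (p : 𝕋) - q) two_pi_pos.ne'
  rw [arcDist_eq_norm]
  rwa [abs_of_pos two_pi_pos, mul_div_cancel_left₀ π two_ne_zero] at this

theorem arcDist_congr_left {p p' : ℝ} (h : (p : 𝕋) = p') (q : ℝ) :
    arcDist p q = arcDist p' q := by
  rw [arcDist_eq_norm, arcDist_eq_norm, h]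

theorem arcDist_half_mem_Icc (u v : ℝ) : arcDist u v / 2 ∈ Icc 0 (π / 2) :=
  ⟨by linarith [arcDist_nonneg u v], by linarith [arcDist_le_pi u v]⟩

theorem chordLen_comm (u v : ℝ) : chordLen u v = chordLen v u := by
  rw [chordLen, chordLen, arcDist_comm]

theorem chordLen_mem_Icc (u v : ℝ) : chordLen u v ∈ Icc (0 : ℝ) 2 := by
  obtain ⟨h0, h1⟩ := arcDist_half_mem_Icc u v
  refine ⟨?_, ?_⟩
  · exact mul_nonneg zero_le_two (sin_nonneg_of_nonneg_of_le_pi h0 (by linarith [pi_pos]))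
  · exact mul_le_of_le_one_right zero_le_two (sin_le_one _)

theorem chordLen_nonneg (u v : ℝ) : 0 ≤ chordLen u v := (chordLen_mem_Icc u v).1

theorem arcDist_eq_chordLen_add (u v : ℝ) :
    arcDist u v = chordLen u v + 2 * sdelta (chordLen u v) := by
  obtain ⟨h0, h1⟩ := arcDist_half_mem_Icc u v
  rw [sdelta, chordLen, mul_div_cancel_left₀ _ two_ne_zero,
    arcsin_sin (by linarith [pi_pos]) h1]
  ring

theorem arcDist_le_reach_chordLen (u v : ℝ) : arcDist u v ≤ reach (chordLen u v) := by
  obtain ⟨h0, h1⟩ := arcDist_half_mem_Icc u v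
  exact (mul_div_cancel₀ _ two_ne_zero).symm.trans_le (two_mul_le_reach_two_mul_sin h0 h1)

theorem arcDist_le_pi_div_two_mul_chordLen (u v : ℝ) :
    arcDist u v ≤ π / 2 * chordLen u v := by
  obtain ⟨h0, h1⟩ := arcDist_half_mem_Icc u v
  have jordan := mul_le_mul_of_nonneg_left (mul_le_sin h0 h1) pi_pos.le
  rw [chordLen]
  field_simp at jordan
  linarith

theorem exists_lift_abs_sub_eq (x q : ℝ) : ∃ y : ℝ, (y : 𝕋) = q ∧ |x - y| = arcDist x q := by
  refine ⟨q + 2 * π * round ((2 * π)⁻¹ * (x - q)), coe_add_two_pi_mul_int _ _, ?_⟩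
  rw [arcDist_eq_norm, ← AddCircle.coe_sub, AddCircle.norm_eq]
  ring_nf

theorem eq_of_coe_eq_of_abs_sub_lt {a b : ℝ} (h : (a : 𝕋) = b) (hab : |a - b| < 2 * π) :
    a = b := by
  obtain ⟨n, hn⟩ := (AddCircle.coe_eq_zero_iff (2 * π)).1
    ((AddCircle.coe_sub (2 * π) a b).trans (sub_eq_zero.2 h))
  rw [← hn, zsmul_eq_mul, abs_mul, abs_of_pos two_pi_pos] at hab
  have : |(n : ℝ)| < 1 := by nlinarith [pi_pos]
  have : n = 0 := Int.abs_lt_one_iff.1 (by exact_mod_cast this)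
  rw [this, zero_smul] at hn
  linarith

/-! ### Lifted walks -/

/-- A representative of the midpoint of the shorter arc cut off by the chord `s`; for a diameter
this selects one of the two half circles. -/
noncomputable def arcMid (s : ℝ × ℝ) : ℝ := (s.1 + s.2) / 2 - π * round ((s.2 - s.1) / (2 * π))

theorem exists_arcMid_eq (s : ℝ × ℝ) :
    ∃ z : ℝ, (z : 𝕋) = s.2 ∧ |z - s.1| = arcDist s.1 s.2 ∧ (s.1 + z) / 2 = arcMid s := by
  refine ⟨s.2 + 2 * π * (-round ((s.2 - s.1) / (2 * π)) : ℤ), coe_add_two_pi_mul_int _ _, ?_, ?_⟩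
  · rw [arcDist_comm, arcDist_eq_norm, ← AddCircle.coe_sub, AddCircle.norm_eq, ← div_eq_inv_mul]
    push_cast
    ring_nf
  · rw [arcMid]
    push_cast
    ring

/-- An oriented lift to the real line of the shorter arc over a chord. Lifts of the same chord
share the midpoint of the arc modulo `2 * π`, even when the chord is a diameter. -/
structure LiftedChord where
  chord : ℝ × ℝ
  start : ℝ
  finish : ℝ
  abs_sub : |finish - start| = arcDist chord.1 chord.2
  mid_eq : (((start + finish) / 2 : ℝ) : 𝕋) = arcMid chord

namespace LiftedChord

/-- The Euclidean length of the underlying chord. -/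
noncomputable def length (e : LiftedChord) : ℝ := chordLen e.chord.1 e.chord.2

theorem length_nonneg (e : LiftedChord) : 0 ≤ e.length := chordLen_nonneg _ _

theorem exists_start_eq {s : ℝ × ℝ} {a b x : ℝ} (hab : |b - a| = arcDist s.1 s.2)
    (hmid : (a + b) / 2 = arcMid s) (hx : (x : 𝕋) = a) :
    ∃ e : LiftedChord, e.chord = s ∧ e.start = x ∧ (e.finish : 𝕋) = b := by
  refine ⟨⟨s, x, x + (b - a), by rwa [add_sub_cancel_left], ?_⟩, rfl, rfl, ?_⟩
  · rw [← hmid, show (x + (x + (b - a))) / 2 = (a + b) / 2 + (x - a) by ring, AddCircle.coe_add,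
      AddCircle.coe_sub, hx, sub_self, add_zero]
  · rw [AddCircle.coe_add, AddCircle.coe_sub, hx, add_sub_cancel]

theorem exists_of_mem_or_swap_mem {S : Finset (ℝ × ℝ)} {e : ℝ × ℝ}
    (he : e ∈ S ∨ (e.2, e.1) ∈ S) {x : ℝ} (hx : (x : 𝕋) = e.1) :
    ∃ f : LiftedChord, f.chord ∈ S ∧ f.start = x ∧ (f.finish : 𝕋) = e.2 ∧
      f.length = chordLen e.1 e.2 := by
  rcases he with he | he
  · obtain ⟨z, hz, hdist, hmid⟩ := exists_arcMid_eq e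
    obtain ⟨f, hf, hstart, hfinish⟩ := exists_start_eq hdist hmid hx
    exact ⟨f, hf ▸ he, hstart, hfinish.trans hz, by rw [length, hf]⟩
  · obtain ⟨z, hz, hdist, hmid⟩ := exists_arcMid_eq (e.2, e.1)
    obtain ⟨f, hf, hstart, hfinish⟩ :=
      exists_start_eq ((abs_sub_comm _ _).trans hdist) (by rw [add_comm, hmid]) (hx.trans hz.symm)
    exact ⟨f, hf ▸ he, hstart, hfinish, by rw [length, hf, chordLen_comm]⟩

theorem same_or_reverse {e f : LiftedChord} (h : e.chord = f.chord)
    (hstart : |f.start - e.start| < 2 * π) (hfinish : |f.start - e.finish| < 2 * π) :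
    (f.start = e.start ∧ f.finish = e.finish) ∨ (f.start = e.finish ∧ f.finish = e.start) := by
  have hmid : (((f.start + f.finish) / 2 : ℝ) : 𝕋) = ((e.start + e.finish) / 2 : ℝ) := by
    rw [e.mid_eq, f.mid_eq, h]
  have hspan : |f.finish - f.start| = |e.finish - e.start| := by rw [e.abs_sub, f.abs_sub, h]
  rcases abs_eq_abs.1 hspan with hspan | hspan
  · have : f.start = e.start := eq_of_coe_eq_of_abs_sub_lt (by
      rw [show f.start = (f.start + f.finish) / 2 - (f.finish - f.start) / 2 by ring,
        AddCircle.coe_sub, hmid, hspan, ← AddCircle.coe_sub]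
      ring_nf) hstart
    exact .inl ⟨this, by linarith⟩
  · have : f.start = e.finish := eq_of_coe_eq_of_abs_sub_lt (by
      rw [show f.start = (f.start + f.finish) / 2 - (f.finish - f.start) / 2 by ring,
        AddCircle.coe_sub, hmid, hspan, ← AddCircle.coe_sub]
      ring_nf) hfinish
    exact .inr ⟨this, by linarith⟩

end LiftedChord

/-- The cost of the lifted walk from `x` to `y` that traverses the given lifted chords in order and
moves along the line in between. It corresponds to `walkCost`, with the same order of arguments. -/
noncomputable def liftedCost (y : ℝ) : ℝ → List LiftedChord → ℝ
  | x, [] => |x - y|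
  | x, e :: L => |x - e.start| + e.length + liftedCost y e.finish L

theorem liftedCost_nonneg (y x : ℝ) (L : List LiftedChord) : 0 ≤ liftedCost y x L := by
  induction L generalizing x with
  | nil => exact abs_nonneg _
  | cons e L ih =>
    have := ih e.finish
    have := e.length_nonneg
    rw [liftedCost]
    positivity

theorem liftedCost_le_abs_add (y x z : ℝ) (L : List LiftedChord) :
    liftedCost y x L ≤ |x - z| + liftedCost y z L := by
  cases L with
  | nil => exact abs_sub_le x z y
  | cons e L =>
    rw [liftedCost, liftedCost]
    linarith [abs_sub_le x z e.start]

theorem liftedCost_append_cons (y x : ℝ) (A B : List LiftedChord) (e : LiftedChord) :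
    liftedCost y x (A ++ e :: B) =
      liftedCost e.start x A + e.length + liftedCost y e.finish B := by
  induction A generalizing x with
  | nil => rfl
  | cons f A ih =>
    rw [List.cons_append, liftedCost, liftedCost, ih]
    ring

theorem continuous_liftedCost (L : List LiftedChord) :
    Continuous fun p : ℝ × ℝ => liftedCost p.1 p.2 L := by
  induction L with
  | nil =>
    simp only [liftedCost]
    fun_prop
  | cons e L ih =>
    have := ih.comp (continuous_fst.prodMk (continuous_const (y := e.finish)) :
      Continuous fun p : ℝ × ℝ => (p.1, e.finish))
    simp only [liftedCost]
    exact Continuous.add (by fun_prop) this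

theorem abs_sub_le_of_superadditive {g : ℝ → ℝ} (le_g : ∀ r, 0 ≤ r → r ≤ g r)
    (add_le : ∀ r t, 0 ≤ r → 0 ≤ t → g r + g t ≤ g (r + t))
    (arc_le : ∀ u v, arcDist u v ≤ g (chordLen u v)) (x y : ℝ) (L : List LiftedChord) :
    |x - y| ≤ g (liftedCost y x L) := by
  induction L generalizing x with
  | nil => exact le_g _ (abs_nonneg _)
  | cons e L ih =>
    have hlen := e.length_nonneg
    have htail := liftedCost_nonneg y e.finish L
    calc |x - y| ≤ |x - e.start| + |e.start - e.finish| + |e.finish - y| :=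
          (abs_sub_le _ e.finish _).trans (by gcongr; exact abs_sub_le _ _ _)
      _ ≤ g |x - e.start| + g e.length + g (liftedCost y e.finish L) := by
          gcongr
          · exact le_g _ (abs_nonneg _)
          · rw [abs_sub_comm, e.abs_sub]
            exact arc_le _ _
          · exact ih _
      _ ≤ g (|x - e.start| + e.length) + g (liftedCost y e.finish L) := by
          gcongr
          exact add_le _ _ (abs_nonneg _) hlen
      _ ≤ g (liftedCost y x (e :: L)) := add_le _ _ (by positivity) htail

theorem abs_sub_le_reach_liftedCost (x y : ℝ) (L : List LiftedChord) :
    |x - y| ≤ reach (liftedCost y x L) :=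
  abs_sub_le_of_superadditive (fun _ => le_reach) (fun _ _ => reach_add_le)
    arcDist_le_reach_chordLen x y L

theorem abs_sub_le_pi_div_two_mul_liftedCost (x y : ℝ) (L : List LiftedChord) :
    |x - y| ≤ π / 2 * liftedCost y x L :=
  abs_sub_le_of_superadditive (fun r hr => le_mul_of_one_le_left hr (by linarith [pi_gt_three]))
    (fun _ _ _ _ => (mul_add _ _ _).ge) arcDist_le_pi_div_two_mul_chordLen x y L

theorem abs_sub_lt_two_pi_of_liftedCost_lt {x y : ℝ} {L : List LiftedChord}
    (h : liftedCost y x L < 4) : |x - y| < 2 * π := by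
  nlinarith [abs_sub_le_pi_div_two_mul_liftedCost x y L, pi_pos]

theorem abs_sub_le_liftedCost_add_sum (x y : ℝ) (L : List LiftedChord) :
    |x - y| ≤ liftedCost y x L + 2 * (L.map fun e => sdelta e.length).sum := by
  induction L generalizing x with
  | nil => simp [liftedCost]
  | cons e L ih =>
    have arc : |e.start - e.finish| = e.length + 2 * sdelta e.length := by
      rw [abs_sub_comm, e.abs_sub, arcDist_eq_chordLen_add, LiftedChord.length]
    rw [liftedCost, List.map_cons, List.sum_cons]
    linarith [ih e.finish, abs_sub_le x e.start y, abs_sub_le e.start e.finish y]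

theorem abs_mid_sub_mid_le {x y D : ℝ} {L : List LiftedChord} {e : LiftedChord} (he : e ∈ L)
    (hcost : liftedCost y x L ≤ D) :
    |(e.start + e.finish) / 2 - (x + y) / 2| ≤ reach (D - e.length) / 2 := by
  obtain ⟨A, B, rfl⟩ := List.append_of_mem he
  rw [liftedCost_append_cons] at hcost
  have hA := liftedCost_nonneg e.start x A
  have hB := liftedCost_nonneg y e.finish B
  have hreach : |x - e.start| + |e.finish - y| ≤ reach (D - e.length) := calc
    _ ≤ reach (liftedCost e.start x A) + reach (liftedCost y e.finish B) :=
      add_le_add (abs_sub_le_reach_liftedCost _ _ _) (abs_sub_le_reach_liftedCost _ _ _)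
    _ ≤ reach (liftedCost e.start x A + liftedCost y e.finish B) := reach_add_le hA hB
    _ ≤ reach (D - e.length) := reach_mono (by positivity) (by linarith)
  have htriangle : |(e.finish - y) - (x - e.start)| ≤ |e.finish - y| + |x - e.start| := abs_sub _ _
  rw [show (e.start + e.finish) / 2 - (x + y) / 2 = ((e.finish - y) - (x - e.start)) / 2 by ring,
    abs_div, abs_two]
  linarith

/-- The second traversal of a chord either repeats the first one, so that the loop between them can
be cut out, or it undoes the first one, so that both traversals can be cut out. -/
theorem liftedCost_le_of_chord_eq {x y : ℝ} {e f : LiftedChord} {B C : List LiftedChord}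
    (hchord : e.chord = f.chord) (h : liftedCost y x (e :: (B ++ f :: C)) < 4) :
    liftedCost y x (e :: C) ≤ liftedCost y x (e :: (B ++ f :: C)) ∨
      liftedCost y x C ≤ liftedCost y x (e :: (B ++ f :: C)) := by
  simp only [liftedCost, liftedCost_append_cons] at h ⊢
  have he := e.length_nonneg
  have hf := f.length_nonneg
  have hx := abs_nonneg (x - e.start)
  have hB := liftedCost_nonneg f.start e.finish B
  have hC := liftedCost_nonneg y f.finish C
  have hfinish : |f.start - e.finish| < 2 * π := by
    rw [abs_sub_comm]
    exact abs_sub_lt_two_pi_of_liftedCost_lt (L := B) (by linarith)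
  have hstart : |f.start - e.start| < 2 * π := by
    rw [abs_sub_comm]
    refine abs_sub_lt_two_pi_of_liftedCost_lt (L := e :: B) ?_
    rw [liftedCost, sub_self, abs_zero]
    linarith
  rcases LiftedChord.same_or_reverse hchord hstart hfinish with ⟨-, hfin⟩ | ⟨-, hfin⟩ <;>
    rw [hfin] at hC ⊢
  · exact .inl (by linarith)
  · exact .inr (by linarith [liftedCost_le_abs_add y x e.start C])

theorem exists_sublist_nodup_chord {x y : ℝ} {L : List LiftedChord} (h : liftedCost y x L < 4) :
    ∃ L', L'.Sublist L ∧ liftedCost y x L' ≤ liftedCost y x L ∧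
      (L'.map LiftedChord.chord).Nodup := by
  induction L generalizing x with
  | nil => exact ⟨[], .slnil, le_rfl, .nil⟩
  | cons e T ih =>
    have hlen := e.length_nonneg
    obtain ⟨T', hsub, hT', hnodup⟩ := ih (x := e.finish) (by
      rw [liftedCost] at h
      linarith [abs_nonneg (x - e.start)])
    have hcost : liftedCost y x (e :: T') ≤ liftedCost y x (e :: T) := by
      rw [liftedCost, liftedCost]
      gcongr
    by_cases hmem : e.chord ∈ T'.map LiftedChord.chord
    · obtain ⟨f, hf, hchord⟩ := List.mem_map.1 hmem
      obtain ⟨B, C, rfl⟩ := List.append_of_mem hf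
      have hsubC : (f :: C).Sublist (B ++ f :: C) := List.sublist_append_right B _
      have hnodupC : ((f :: C).map LiftedChord.chord).Nodup := hnodup.sublist (hsubC.map _)
      rcases liftedCost_le_of_chord_eq hchord.symm (hcost.trans_lt h) with hle | hle
      · refine ⟨e :: C, ((List.sublist_cons_self f C).trans (hsubC.trans hsub)).cons_cons e,
          hle.trans hcost, ?_⟩
        rwa [List.map_cons, ← hchord]
      · exact ⟨C, ((List.sublist_cons_self f C).trans (hsubC.trans hsub)).cons e,
          hle.trans hcost, hnodupC.of_cons⟩
    · exact ⟨e :: T', hsub.cons_cons e, hcost, List.nodup_cons.2 ⟨hmem, hnodup⟩⟩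

theorem walkCost_congr_left {x x' : ℝ} (h : (x : 𝕋) = x') (q : ℝ) (L : List (ℝ × ℝ)) :
    walkCost q x L = walkCost q x' L := by
  cases L with
  | nil => exact arcDist_congr_left h q
  | cons e L => rw [walkCost, walkCost, arcDist_congr_left h]

theorem exists_liftedCost_eq_walkCost {S : Finset (ℝ × ℝ)} (q x : ℝ) {L : List (ℝ × ℝ)}
    (hL : ∀ e ∈ L, e ∈ S ∨ (e.2, e.1) ∈ S) :
    ∃ y : ℝ, (y : 𝕋) = q ∧
      ∃ L' : List LiftedChord, (∀ e ∈ L', e.chord ∈ S) ∧ liftedCost y x L' = walkCost q x L := by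
  induction L generalizing x with
  | nil =>
    obtain ⟨y, hy, hdist⟩ := exists_lift_abs_sub_eq x q
    exact ⟨y, hy, [], by simp, hdist⟩
  | cons e L ih =>
    obtain ⟨he, hL⟩ := List.forall_mem_cons.1 hL
    obtain ⟨u, hu, hdist⟩ := exists_lift_abs_sub_eq x e.1
    obtain ⟨f, hfS, hstart, hfinish, hlength⟩ := LiftedChord.exists_of_mem_or_swap_mem he hu
    obtain ⟨y, hy, L', hL'S, hcost⟩ := ih f.finish hL
    refine ⟨y, hy, f :: L', List.forall_mem_cons.2 ⟨hfS, hL'S⟩, ?_⟩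
    rw [liftedCost, walkCost, hcost, hstart, hdist, hlength, walkCost_congr_left hfinish]

/-! ### The covering inequality -/

/-- Some lifted walk from `x` to `y` along chords of `S` costs less than `D`. -/
def LiftedJoined (S : Finset (ℝ × ℝ)) (D x y : ℝ) : Prop :=
  ∃ L : List LiftedChord, (∀ e ∈ L, e.chord ∈ S) ∧ liftedCost y x L < D

theorem LiftedJoined.refl (S : Finset (ℝ × ℝ)) {D : ℝ} (hD : 0 < D) (x : ℝ) :
    LiftedJoined S D x x := ⟨[], by simp, by rwa [liftedCost, sub_self, abs_zero]⟩

theorem LiftedJoined.abs_sub_lt {S : Finset (ℝ × ℝ)} {D x y : ℝ} (hD : D ≤ 4)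
    (h : LiftedJoined S D x y) : |x - y| < 2 * π := by
  obtain ⟨L, -, hcost⟩ := h
  exact abs_sub_lt_two_pi_of_liftedCost_lt (hcost.trans_le hD)

theorem isOpen_setOf_liftedJoined (S : Finset (ℝ × ℝ)) (D : ℝ) {f g : ℝ → ℝ}
    (hf : Continuous f) (hg : Continuous g) : IsOpen {t | LiftedJoined S D (f t) (g t)} := by
  have : {t | LiftedJoined S D (f t) (g t)} =
      ⋃ L ∈ {L : List LiftedChord | ∀ e ∈ L, e.chord ∈ S}, {t | liftedCost (g t) (f t) L < D} := by
    ext t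
    simp only [LiftedJoined, mem_ofPred_eq, mem_iUnion, exists_prop]
  rw [this]
  exact isOpen_biUnion fun L _ =>
    isOpen_lt ((continuous_liftedCost L).comp (hg.prodMk hf)) continuous_const

/-- The conditions on `t` are open, cover `[0, π]`, and hold trivially at `0` and `π` respectively,
so by connectedness they hold simultaneously somewhere. -/
theorem exists_liftedJoined_both_ways {S : Finset (ℝ × ℝ)} {D : ℝ} (hD₀ : 0 < D) (hD : D ≤ 4)
    (hjoin : ∀ x q : ℝ, ∃ y : ℝ, (y : 𝕋) = q ∧ LiftedJoined S D x y) (θ : ℝ) :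
    ∃ t ∈ Icc 0 π, LiftedJoined S D (θ - t) (θ + t) ∧
      LiftedJoined S D (θ - t) (θ + t - 2 * π) := by
  refine isPreconnected_Icc {t | LiftedJoined S D (θ - t) (θ + t)}
    {t | LiftedJoined S D (θ - t) (θ + t - 2 * π)}
    (isOpen_setOf_liftedJoined S D (by fun_prop) (by fun_prop))
    (isOpen_setOf_liftedJoined S D (by fun_prop) (by fun_prop)) (fun t ht => ?_)
    ⟨0, ⟨le_rfl, pi_pos.le⟩, ?_⟩ ⟨π, ⟨pi_pos.le, le_rfl⟩, ?_⟩
  · obtain ⟨y, hy, hjoined⟩ := hjoin (θ - t) (θ + t)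
    obtain ⟨n, hn⟩ := (AddCircle.coe_eq_zero_iff (2 * π)).1
      ((AddCircle.coe_sub (2 * π) y (θ + t)).trans (sub_eq_zero.2 hy))
    have hspan := abs_lt.1 (hjoined.abs_sub_lt hD)
    obtain rfl : y = θ + t + n * (2 * π) := by rw [← zsmul_eq_mul, hn]; ring
    have n_lt : (n : ℝ) < 1 := by nlinarith [ht.1, pi_pos]
    have lt_n : (-2 : ℝ) < n := by nlinarith [ht.2, pi_pos]
    obtain rfl | rfl : n = 0 ∨ n = -1 := by
      have : n < 1 := by exact_mod_cast n_lt
      have : -2 < n := by exact_mod_cast lt_n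
      omega
    · left
      simpa using hjoined
    · right
      simpa [sub_eq_add_neg] using hjoined
  · simpa using LiftedJoined.refl S hD₀ θ
  · have := LiftedJoined.refl S hD₀ (θ - π)
    rwa [mem_ofPred_eq, show θ + π - 2 * π = θ - π by ring]

/-- A closed arc that contains the midpoint of any arc whose endpoints are joined along it by a walk
of cost at most `D` through the chord `s`. -/
noncomputable def served (D : ℝ) (s : ℝ × ℝ) : Set 𝕋 :=
  Metric.closedBall (arcMid s : 𝕋) (reach (D - chordLen s.1 s.2) / 2)

/-- A bound for half the length that a walk of cost at most `D` through chords of `S` can save over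
the arc it spans, if that arc has midpoint `θ`. The saving of each chord is truncated at `π - D`,
because no more than that is ever needed. -/
noncomputable def coverage (S : Finset (ℝ × ℝ)) (D : ℝ) (θ : 𝕋) : ℝ :=
  ∑ s ∈ S, (served D s).indicator (fun _ => min (sdelta (chordLen s.1 s.2)) (π - D)) θ

theorem min_sum_le_sum_min {ι : Type*} (s : Finset ι) {f : ι → ℝ} {c : ℝ} (hc : 0 ≤ c)
    (hf : ∀ i ∈ s, 0 ≤ f i) : min (∑ i ∈ s, f i) c ≤ ∑ i ∈ s, min (f i) c := by
  by_cases h : ∃ i ∈ s, c ≤ f i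
  · obtain ⟨i, hi, hci⟩ := h
    calc min (∑ i ∈ s, f i) c ≤ min (f i) c := (min_le_right _ _).trans_eq (min_eq_right hci).symm
      _ ≤ ∑ i ∈ s, min (f i) c :=
        Finset.single_le_sum (f := fun i => min (f i) c) (fun j hj => le_min (hf j hj) hc) hi
  · push Not at h
    exact (min_le_left _ _).trans_eq
      (Finset.sum_congr rfl fun i hi => (min_eq_left (h i hi).le).symm)

theorem sdelta_chordLen_nonneg (u v : ℝ) : 0 ≤ sdelta (chordLen u v) :=
  sdelta_nonneg (chordLen_mem_Icc u v)

theorem mid_mem_served {D x y : ℝ} {L : List LiftedChord} {e : LiftedChord} (he : e ∈ L)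
    (hcost : liftedCost y x L ≤ D) : (((x + y) / 2 : ℝ) : 𝕋) ∈ served D e.chord := by
  rw [served, mem_closedBall_iff_norm', ← e.mid_eq, ← AddCircle.coe_sub]
  exact QuotientAddGroup.norm_mk_le_norm.trans (abs_mid_sub_mid_le he hcost)

theorem min_sum_sdelta_le_coverage {S : Finset (ℝ × ℝ)} {D x y : ℝ} (hD : D ≤ π)
    {L : List LiftedChord} (hL : ∀ e ∈ L, e.chord ∈ S) (hnodup : (L.map LiftedChord.chord).Nodup)
    (hcost : liftedCost y x L ≤ D) :
    min (L.map fun e => sdelta e.length).sum (π - D) ≤ coverage S D ((x + y) / 2 : ℝ) := by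
  have hc : 0 ≤ π - D := sub_nonneg.2 hD
  have hsub : (L.map LiftedChord.chord).toFinset ⊆ S := fun s hs => by
    obtain ⟨e, he, rfl⟩ := List.mem_map.1 (List.mem_toFinset.1 hs)
    exact hL e he
  have hsum : (L.map fun e => sdelta e.length).sum =
      ∑ s ∈ (L.map LiftedChord.chord).toFinset, sdelta (chordLen s.1 s.2) := by
    rw [List.sum_toFinset _ hnodup, List.map_map]
    rfl
  calc min (L.map fun e => sdelta e.length).sum (π - D)
      ≤ ∑ s ∈ (L.map LiftedChord.chord).toFinset, min (sdelta (chordLen s.1 s.2)) (π - D) := by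
        rw [hsum]
        exact min_sum_le_sum_min _ hc fun s _ => sdelta_chordLen_nonneg _ _
    _ = ∑ s ∈ (L.map LiftedChord.chord).toFinset,
          (served D s).indicator (fun _ => min (sdelta (chordLen s.1 s.2)) (π - D))
            (((x + y) / 2 : ℝ) : 𝕋) := Finset.sum_congr rfl fun s hs => by
        obtain ⟨e, he, rfl⟩ := List.mem_map.1 (List.mem_toFinset.1 hs)
        rw [indicator_of_mem (mid_mem_served he hcost)]
    _ ≤ coverage S D ((x + y) / 2 : ℝ) :=
        Finset.sum_le_sum_of_subset_of_nonneg hsub fun s _ _ =>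
          indicator_nonneg (fun _ _ => le_min (sdelta_chordLen_nonneg _ _) hc) _

theorem coverage_nonneg (S : Finset (ℝ × ℝ)) {D : ℝ} (hD : D ≤ π) (θ : 𝕋) :
    0 ≤ coverage S D θ :=
  Finset.sum_nonneg fun _ _ =>
    indicator_nonneg (fun _ _ => le_min (sdelta_chordLen_nonneg _ _) (sub_nonneg.2 hD)) _

theorem LiftedJoined.min_le_coverage {S : Finset (ℝ × ℝ)} {D x y : ℝ} (hD : D ≤ π)
    (h : LiftedJoined S D x y) :
    min ((|x - y| - D) / 2) (π - D) ≤ coverage S D ((x + y) / 2 : ℝ) := by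
  obtain ⟨L, hLS, hcost⟩ := h
  obtain ⟨L', hsub, hle, hnodup⟩ :=
    exists_sublist_nodup_chord (hcost.trans_le (hD.trans pi_le_four))
  refine le_trans (min_le_min_right _ ?_) (min_sum_sdelta_le_coverage hD
    (fun e he => hLS e (hsub.subset he)) hnodup (hle.trans hcost.le))
  linarith [abs_sub_le_liftedCost_add_sum x y L']

theorem pi_sub_le_coverage_add {S : Finset (ℝ × ℝ)} {D : ℝ} (hD₀ : 0 < D) (hD : D ≤ π)
    (hjoin : ∀ x q : ℝ, ∃ y : ℝ, (y : 𝕋) = q ∧ LiftedJoined S D x y) (θ : 𝕋) :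
    π - D ≤ coverage S D θ + coverage S D (θ + (π : ℝ)) := by
  obtain ⟨θ, rfl⟩ := QuotientAddGroup.mk_surjective θ
  obtain ⟨t, ht, hnear, hfar⟩ :=
    exists_liftedJoined_both_ways hD₀ (hD.trans pi_le_four) hjoin θ
  have near := hnear.min_le_coverage hD
  have far := hfar.min_le_coverage hD
  have opposite : (((θ - t + (θ + t - 2 * π)) / 2 : ℝ) : 𝕋) = θ + (π : ℝ) := by
    rw [show (θ - t + (θ + t - 2 * π)) / 2 = θ - π by ring,
      ← coe_add_two_pi_mul_int (θ - π) 1, ← AddCircle.coe_add]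
    push_cast
    ring_nf
  rw [opposite, show θ - t - (θ + t - 2 * π) = 2 * (π - t) by ring,
    abs_of_nonneg (by linarith [ht.2])] at far
  rw [show (θ - t + (θ + t)) / 2 = θ by ring, show θ - t - (θ + t) = -(2 * t) by ring, abs_neg,
    abs_of_nonneg (by linarith [ht.1])] at near
  have near_nonneg := coverage_nonneg S hD (θ : 𝕋)
  have far_nonneg := coverage_nonneg S hD (θ + (π : ℝ) : 𝕋)
  rcases min_le_iff.1 near with near | near <;> rcases min_le_iff.1 far with far | far <;>
    linarith

theorem measurableSet_served (D : ℝ) (s : ℝ × ℝ) : MeasurableSet (served D s) :=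
  Metric.isClosed_closedBall.measurableSet

theorem volume_real_served_le (D : ℝ) (s : ℝ × ℝ) (h : chordLen s.1 s.2 ≤ D) :
    volume.real (served D s) ≤ reach (D - chordLen s.1 s.2) := by
  rw [Measure.real, served, AddCircle.volume_closedBall]
  refine ENNReal.toReal_le_of_le_ofReal (reach_nonneg (sub_nonneg.2 h))
    (ENNReal.ofReal_le_ofReal ?_)
  exact (min_le_right _ _).trans_eq (mul_div_cancel₀ _ two_ne_zero)

theorem integrable_indicator_served (D : ℝ) (s : ℝ × ℝ) (c : ℝ) :
    Integrable ((served D s).indicator fun _ => c) :=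
  (integrable_const c).indicator (measurableSet_served D s)

theorem integrable_coverage (S : Finset (ℝ × ℝ)) (D : ℝ) : Integrable (coverage S D) :=
  integrable_finsetSum _ fun s _ => integrable_indicator_served D s _

theorem integral_coverage_le (S : Finset (ℝ × ℝ)) {D : ℝ} (hD₀ : 2 ≤ D) (hD : D ≤ π) :
    ∫ θ, coverage S D θ ≤ ∑ s ∈ S, min (sdelta (chordLen s.1 s.2)) (π - D) *
      reach (D - chordLen s.1 s.2) := by
  simp only [coverage]
  rw [integral_finsetSum _ fun s _ => integrable_indicator_served D s _]
  refine Finset.sum_le_sum fun s _ => ?_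
  rw [integral_indicator_const _ (measurableSet_served D s), smul_eq_mul, mul_comm]
  exact mul_le_mul_of_nonneg_left
    (volume_real_served_le D s ((chordLen_mem_Icc s.1 s.2).2.trans hD₀))
    (le_min (sdelta_chordLen_nonneg _ _) (sub_nonneg.2 hD))

theorem pi_mul_pi_sub_le_sum_of_liftedJoined {S : Finset (ℝ × ℝ)} {D : ℝ} (hD₀ : 2 ≤ D) (hD : D ≤ π)
    (hjoin : ∀ x q : ℝ, ∃ y : ℝ, (y : 𝕋) = q ∧ LiftedJoined S D x y) :
    π * (π - D) ≤ ∑ s ∈ S, min (sdelta (chordLen s.1 s.2)) (π - D) *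
      reach (D - chordLen s.1 s.2) := by
  have hint := integrable_coverage S D
  have := calc
    2 * π * (π - D) = ∫ _ : 𝕋, (π - D) := by
        rw [integral_const, Measure.real, AddCircle.measure_univ,
          ENNReal.toReal_ofReal two_pi_pos.le, smul_eq_mul]
    _ ≤ ∫ θ : 𝕋, coverage S D θ + coverage S D (θ + (π : ℝ)) :=
        integral_mono (integrable_const _) (hint.add (hint.comp_add_right _))
          (pi_sub_le_coverage_add (by linarith) hD hjoin)
    _ = 2 * ∫ θ, coverage S D θ := by
        rw [integral_add hint (hint.comp_add_right _), integral_add_right_eq_self, ← two_mul]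
  linarith [integral_coverage_le S hD₀ hD]

/-! ### Shortest paths -/

theorem walkCost_nonneg (q p : ℝ) (L : List (ℝ × ℝ)) : 0 ≤ walkCost q p L := by
  induction L generalizing p with
  | nil => exact arcDist_nonneg p q
  | cons e L ih => exact add_nonneg (add_nonneg (arcDist_nonneg _ _) (chordLen_nonneg _ _)) (ih _)

section ShortestPaths

variable {S : Finset (ℝ × ℝ)}

theorem dS_le_walkCost {L : List (ℝ × ℝ)} (hL : ∀ e ∈ L, e ∈ S ∨ (e.2, e.1) ∈ S) (p q : ℝ) :
    dS S p q ≤ walkCost q p L := by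
  refine csInf_le ⟨0, ?_⟩ ⟨L, hL, rfl⟩
  rintro _ ⟨L, -, rfl⟩
  exact walkCost_nonneg q p L

theorem exists_walkCost_lt_of_dS_lt {p q c : ℝ} (h : dS S p q < c) :
    ∃ L : List (ℝ × ℝ), (∀ e ∈ L, e ∈ S ∨ (e.2, e.1) ∈ S) ∧ walkCost q p L < c := by
  obtain ⟨_, ⟨L, hL, rfl⟩, hlt⟩ := exists_lt_of_csInf_lt
    (s := {c | ∃ L : List (ℝ × ℝ), (∀ e ∈ L, e ∈ S ∨ (e.2, e.1) ∈ S) ∧ c = walkCost q p L})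
    ⟨_, [], by simp, rfl⟩ h
  exact ⟨L, hL, hlt⟩

theorem dS_le_diamS (S : Finset (ℝ × ℝ)) (p q : ℝ) : dS S p q ≤ diamS S := by
  refine le_csSup ⟨π, ?_⟩ ⟨p, q, rfl⟩
  rintro _ ⟨p, q, rfl⟩
  exact (dS_le_walkCost (L := []) (by simp) p q).trans (arcDist_le_pi p q)

theorem exists_liftedJoined_of_diamS_lt {D : ℝ} (h : diamS S < D) (x q : ℝ) :
    ∃ y : ℝ, (y : 𝕋) = q ∧ LiftedJoined S D x y := by
  obtain ⟨L, hL, hcost⟩ := exists_walkCost_lt_of_dS_lt ((dS_le_diamS S x q).trans_lt h)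
  obtain ⟨y, hy, L', hL', hcost'⟩ := exists_liftedCost_eq_walkCost q x hL
  exact ⟨y, hy, L', hL', hcost'.trans_lt hcost⟩

theorem pi_mul_pi_sub_le_sum_of_diamS_le {D : ℝ} (hD₀ : 2 ≤ D) (hD : D < π) (h : diamS S ≤ D) :
    π * (π - D) ≤ ∑ s ∈ S, min (sdelta (chordLen s.1 s.2)) (π - D) *
      reach (D - chordLen s.1 s.2) := by
  have hcont : Continuous fun D' => ∑ s ∈ S, min (sdelta (chordLen s.1 s.2)) (π - D') *
      reach (D' - chordLen s.1 s.2) :=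
    continuous_finsetSum _ fun s _ => (by fun_prop : Continuous fun D' =>
      min (sdelta (chordLen s.1 s.2)) (π - D')).mul (continuous_reach.comp (by fun_prop))
  have hcont_left : Continuous fun D' => π * (π - D') := by fun_prop
  refine le_of_tendsto_of_tendsto (b := 𝓝[>] D) hcont_left.continuousWithinAt
    hcont.continuousWithinAt ?_
  filter_upwards [Ioo_mem_nhdsGT hD] with D' hD'
  exact pi_mul_pi_sub_le_sum_of_liftedJoined (hD₀.trans hD'.1.le) hD'.2.le
    (exists_liftedJoined_of_diamS_lt (h.trans_lt hD'.1))

theorem half_lt_chordLen_of_shortChordDeficit {k : ℕ} {a : ℝ} (ha : a ∈ Icc (0 : ℝ) 2)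
    (hdeficit : ShortChordDeficit k a) (hcard : S.card ≤ k) (hdiam : diamS S ≤ π - sdelta a)
    {s : ℝ × ℝ} (hs : s ∈ S) : (π - sdelta a) / 2 < chordLen s.1 s.2 := by
  by_contra! hshort
  have δ_pos := hdeficit.sdelta_pos ha
  unfold ShortChordDeficit at hdeficit
  obtain ⟨D, hD⟩ : ∃ D, D = π - sdelta a := ⟨_, rfl⟩
  rw [← hD] at hdeficit hdiam hshort
  have hD_lower : π / 2 + 1 ≤ D := by linarith [sdelta_le ha]
  have half_mem : D / 2 ∈ Icc (0 : ℝ) 2 :=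
    ⟨by linarith [pi_pos], by linarith [pi_le_four]⟩
  have covering := pi_mul_pi_sub_le_sum_of_diamS_le (by linarith [pi_gt_three]) (by linarith) hdiam
  rw [show π - D = sdelta a by linarith, ← Finset.add_sum_erase S _ hs] at covering
  have short_share : min (sdelta (chordLen s.1 s.2)) (sdelta a) * reach (D - chordLen s.1 s.2) ≤
      sdelta (D / 2) * reach (D / 2) := calc
    _ ≤ sdelta (chordLen s.1 s.2) * reach (D - chordLen s.1 s.2) :=
      mul_le_mul_of_nonneg_right (min_le_left _ _) (reach_nonneg (by linarith [half_mem.1]))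
    _ ≤ sdelta (D / 2) * reach (D - D / 2) :=
      monotoneOn_sdelta_mul_reach hD_lower (chordLen_mem_Icc _ _) half_mem hshort
    _ = sdelta (D / 2) * reach (D / 2) := by rw [sub_half]
  have others_share := Finset.sum_le_card_nsmul (S.erase s) _ _ fun e _ =>
    min_sdelta_mul_reach_le (chordLen_mem_Icc e.1 e.2) ha hD_lower
  have share_nonneg : 0 ≤ sdelta a * reach (D - a) :=
    mul_nonneg δ_pos.le (reach_nonneg (by linarith [ha.2, pi_gt_three]))
  have card_le : ((S.erase s).card : ℝ) ≤ k - 1 := by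
    rw [le_sub_iff_add_le]
    exact_mod_cast (Finset.card_erase_add_one hs).trans_le hcard
  rw [nsmul_eq_mul] at others_share
  linarith [mul_le_mul_of_nonneg_right card_le share_nonneg]

theorem dS_le_dOne {s : ℝ × ℝ} (hs : s ∈ S) (p q : ℝ) : dS S p q ≤ dOne s.1 s.2 p q := by
  refine le_min (dS_le_walkCost (L := []) (by simp) p q) (le_min ?_ ?_)
  · exact dS_le_walkCost (L := [s]) (by simpa using .inl hs) p q
  · rw [chordLen_comm]
    exact dS_le_walkCost (L := [(s.2, s.1)]) (by simpa using .inr hs) p q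

theorem dOne_comm (u v p q : ℝ) : dOne u v p q = dOne v u p q := by
  rw [dOne, dOne, chordLen_comm v u, min_comm (arcDist p u + _ + _)]

theorem inf'_le_of_mem_or_swap_mem (hS : S.Nonempty) {f : ℝ × ℝ → ℝ}
    (hf : ∀ u v, f (v, u) = f (u, v)) {e : ℝ × ℝ} (he : e ∈ S ∨ (e.2, e.1) ∈ S) :
    S.inf' hS f ≤ f e :=
  he.elim (Finset.inf'_le f) fun he => (Finset.inf'_le f he).trans_eq (hf e.1 e.2)

theorem dS_eq_min_inf' (hS : S.Nonempty) {p q : ℝ}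
    (hlong : ∀ s ∈ S, dS S p q < 2 * chordLen s.1 s.2) :
    dS S p q = min (arcDist p q) (S.inf' hS fun s => dOne s.1 s.2 p q) := by
  refine le_antisymm (le_min (dS_le_walkCost (L := []) (by simp) p q)
    (Finset.le_inf' _ _ fun s hs => dS_le_dOne hs p q)) ?_
  by_contra! hlt
  obtain ⟨L, hL, hcost⟩ := exists_walkCost_lt_of_dS_lt
    (lt_min hlt ((Finset.lt_inf'_iff hS).2 hlong))
  obtain ⟨hcost, hcost_long⟩ := lt_min_iff.1 hcost
  obtain ⟨hcost_arc, hcost_one⟩ := lt_min_iff.1 hcost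
  match L, hL with
  | [], _ => exact hcost_arc.false
  | [e], hL =>
    have hone := inf'_le_of_mem_or_swap_mem hS (f := fun s => dOne s.1 s.2 p q)
      (fun u v => dOne_comm v u p q) (hL e (by simp))
    exact hcost_one.not_ge (hone.trans ((min_le_right _ _).trans (min_le_left _ _)))
  | e :: f :: T, hL =>
    have he := inf'_le_of_mem_or_swap_mem hS (f := fun s => 2 * chordLen s.1 s.2)
      (fun u v => by rw [chordLen_comm]) (hL e (by simp))
    have hf := inf'_le_of_mem_or_swap_mem hS (f := fun s => 2 * chordLen s.1 s.2)
      (fun u v => by rw [chordLen_comm]) (hL f (by simp))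
    simp only [walkCost] at hcost_long
    linarith [arcDist_nonneg p e.1, arcDist_nonneg e.2 f.1, walkCost_nonneg q f.2 T]

end ShortestPaths

theorem stmt19_general (k : ℕ) (hk : k ∈ ({3, 4, 5, 6} : Set ℕ)) (dstar : ℝ)
    (hd : dstarSpec k dstar) (S : Finset (ℝ × ℝ)) (hS : S.Nonempty) (hcard : S.card ≤ k)
    (hdiam : diamS S ≤ π - dstar) (p q : ℝ) :
    dS S p q = min (arcDist p q) (S.inf' hS fun s => dOne s.1 s.2 p q) := by
  obtain ⟨a, ha, rfl, hdeficit⟩ := exists_shortChordDeficit hk hd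
  refine dS_eq_min_inf' hS fun s hs => ?_
  have := half_lt_chordLen_of_shortChordDeficit ha hdeficit hcard hdiam hs
  linarith [dS_le_diamS S p q]

/-- antipodal pairs never need a combination of shortcuts: if
`k ∈ {3,4,5,6}` and `S` is a set of `k` shortcuts with `diam(S) ≤ π - δ*_k`, then for
every antipodal pair `p`, `q = p + π` we have
`d_S(p,q) = min(d(p,q), min_{s ∈ S} d_{{s}}(p,q))`. -/
theorem stmt19 (k : ℕ) (hk : k ∈ ({3, 4, 5, 6} : Set ℕ)) (dstar : ℝ)
    (hd : dstarSpec k dstar)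
    (S : Finset (ℝ × ℝ)) (hcard : S.card = k) (hval : ∀ s ∈ S, IsShortcut s)
    (hdiam : diamS S ≤ π - dstar) (p : ℝ) :
    dS S p (p + π) = min (arcDist p (p + π))
      (S.inf' (Finset.card_pos.mp (by
          rw [hcard]
          simp only [Set.mem_insert_iff, Set.mem_singleton_iff] at hk
          rcases hk with rfl | rfl | rfl | rfl <;> norm_num))
        fun s => dOne s.1 s.2 p (p + π)) := by
  exact stmt19_general k hk dstar hd S _ hcard.le hdiam p (p + π)
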